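/- Balanced truncation error bound: let a stable linear system be given in balanced coordinates, i.e. A ∈ ℝ^{N×N} Hurwitz, B ∈ ℝ^{N×p}, L ∈ ℝ^{q×N}, such that the matrix Σ = diag(σ₁, …, σ_N) with σ₁ ≥ … ≥ σ_N > 0 satisfies both Lyapunov equations A·Σ + Σ·Aᵀ = −B·Bᵀ and Aᵀ·Σ + Σ·A = −Lᵀ·L, and assume the σᵢ are pairwise distinct. For 1 ≤ r < N, let Ã = A₁₁ ∈ ℝ^{r×r}, B̃ = B₁ ∈ ℝ^{r×p}, L̃ = L₁ ∈ ℝ^{q×r} be the leading blocks obtained by truncating the last N − r states. Then for every ω ∈ ℝ the resolvents (iωI − A) and (iωI − Ã) are invertible and sup_{ω ∈ ℝ} ‖L(iωI − A)⁻¹B − L̃(iωI − Ã)⁻¹B̃‖ ≤ 2(σ_{r+1} + σ_{r+2} + … + σ_N), where ‖·‖ is the operator norm of a q×p complex matrix. -/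

import Mathlib

open Matrix Complex

/-- `A` is Hurwitz if every eigenvalue of `A` over `ℂ` has negative real part. -/
def IsHurwitz {N : ℕ} (A : Matrix (Fin N) (Fin N) ℝ) : Prop :=
  ∀ μ ∈ spectrum ℂ (A.map (Complex.ofReal)), μ.re < 0

/-- The operator norm of a `q × p` complex matrix, viewed as a linear map
between the Euclidean spaces `ℂ^p` and `ℂ^q`. -/
noncomputable def matOpNorm {q p : ℕ} (M : Matrix (Fin q) (Fin p) ℂ) : ℝ :=
  ‖LinearMap.toContinuousLinearMap (Matrix.toEuclideanLin M)‖
/-!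
Both Lyapunov equations survive the shift `A ↦ A - s • 1` with `re s = 0`, so it suffices to
compare `L A⁻¹ B` with its truncation at the frequency `0`. Let `A y = B u`, and let `z` be the
zero-extended solution of the truncated equation. If all dropped states share one singular value
`c`, then `A (y - z)` is supported on them, and there `y - z` and `y + z` agree. The energy
identities of `y - z` with weight `Σ` and of `y + z` with weight `Σ⁻¹` therefore contain the same
cross term up to the factor `c ^ 2`; eliminating it gives `‖L (y - z)‖ ≤ 2 c ‖u‖`. Dropping one
value of `σ` at a time yields the sum. Truncations stay invertible because a vector `z` in the
kernel of the truncated matrix satisfies `A Σ² z = Σ² A z`, hence `A p(Σ²) z = p(Σ²) A z` for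
every polynomial `p`, and some `p(Σ²)` annihilates the kept states only.
-/

section Vectors

variable {𝕜 m n k o : Type*} [RCLike 𝕜] [Fintype n] [Fintype k]

lemma re_star_dotProduct_self (v : n → 𝕜) :
    RCLike.re (star v ⬝ᵥ v) = ‖WithLp.toLp 2 v‖ ^ 2 := by
  rw [← inner_self_eq_norm_sq (𝕜 := 𝕜), EuclideanSpace.inner_toLp_toLp, dotProduct_comm]

lemma abs_re_star_dotProduct_le (v w : n → 𝕜) :
    |RCLike.re (star v ⬝ᵥ w)| ≤ ‖WithLp.toLp 2 v‖ * ‖WithLp.toLp 2 w‖ := by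
  rw [dotProduct_comm, ← EuclideanSpace.inner_toLp_toLp]
  exact (RCLike.abs_re_le_norm _).trans (norm_inner_le_norm _ _)

lemma submatrix_mulVec_eq_mulVec_extend (M : Matrix m n 𝕜) (f : o → m) (e : k ↪ n) (x : k → 𝕜) :
    M.submatrix f e *ᵥ x = (M *ᵥ Function.extend e x 0) ∘ f := by
  ext i
  refine Fintype.sum_of_injective e e.injective _ _ (fun j hj => ?_) fun j => ?_
  · rw [Function.extend_apply' x _ j hj, Pi.zero_apply, mul_zero]
  · exact congr_arg (M (f i) (e j) * ·) (e.injective.extend_apply x 0 j).symm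

open scoped Matrix.Norms.L2Operator

lemma l2_opNorm_le_of_norm_mulVec_le [Fintype m] [DecidableEq n] {M : Matrix m n 𝕜} {c : ℝ}
    (hc : 0 ≤ c) (h : ∀ u, ‖WithLp.toLp 2 (M *ᵥ u)‖ ≤ c * ‖WithLp.toLp 2 u‖) : ‖M‖ ≤ c := by
  rw [l2_opNorm_def]
  exact ContinuousLinearMap.opNorm_le_bound _ hc fun u => h u.ofLp

lemma matOpNorm_eq_l2_opNorm {q p : ℕ} (M : Matrix (Fin q) (Fin p) ℂ) : matOpNorm M = ‖M‖ :=
  rfl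

end Vectors

lemma inv_neg_of_isUnit {R n : Type*} [CommRing R] [Fintype n] [DecidableEq n] {M : Matrix n n R}
    (hM : IsUnit M) : (-M)⁻¹ = -M⁻¹ :=
  inv_eq_right_inv <| by
    rw [neg_mul_neg, mul_nonsing_inv M ((isUnit_iff_isUnit_det M).mp hM)]

section RealDiagonal

variable {𝕜 n : Type*} [RCLike 𝕜] [DecidableEq n]

variable (𝕜) in
/-- The diagonal matrix over `𝕜` with real entries `d`; the Gramian of a balanced realization has
this form. -/
def realDiagonal (d : n → ℝ) : Matrix n n 𝕜 :=
  diagonal fun i => (d i : 𝕜)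

lemma isHermitian_realDiagonal (d : n → ℝ) : (realDiagonal 𝕜 d).IsHermitian :=
  isHermitian_diagonal_of_self_adjoint _ <| funext fun i => RCLike.conj_ofReal (d i)

variable [Fintype n]

lemma realDiagonal_mulVec_apply (d : n → ℝ) (z : n → 𝕜) (i : n) :
    (realDiagonal 𝕜 d *ᵥ z) i = d i * z i :=
  mulVec_diagonal _ _ _

lemma realDiagonal_mul (d d' : n → ℝ) :
    realDiagonal 𝕜 d * realDiagonal 𝕜 d' = realDiagonal 𝕜 (d * d') := by
  simp [realDiagonal]

lemma realDiagonal_mul_inv {d : n → ℝ} (hd : ∀ i, d i ≠ 0) :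
    realDiagonal 𝕜 d * realDiagonal 𝕜 d⁻¹ = 1 := by
  simp [realDiagonal, hd]

end RealDiagonal

section Balanced

variable {𝕜 m n o k : Type*} [RCLike 𝕜] [Fintype m] [Fintype n] [Fintype o]

lemma norm_sq_mulVec_of_lyapunov {A P : Matrix n n 𝕜} {C : Matrix o n 𝕜} (hP : P.IsHermitian)
    (h : Aᴴ * P + P * A = -(Cᴴ * C)) (z : n → 𝕜) :
    ‖WithLp.toLp 2 (C *ᵥ z)‖ ^ 2 = -(2 * RCLike.re (star (P *ᵥ z) ⬝ᵥ A *ᵥ z)) := by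
  have hC : star (C *ᵥ z) ⬝ᵥ C *ᵥ z = star z ⬝ᵥ (Cᴴ * C) *ᵥ z := by
    rw [star_mulVec, ← dotProduct_mulVec, mulVec_mulVec]
  have hPA : star z ⬝ᵥ (P * A) *ᵥ z = star (P *ᵥ z) ⬝ᵥ A *ᵥ z := by
    rw [star_mulVec, ← dotProduct_mulVec, hP.eq, mulVec_mulVec]
  have hAP : star z ⬝ᵥ (Aᴴ * P) *ᵥ z = star (star (P *ᵥ z) ⬝ᵥ A *ᵥ z) := by
    rw [← star_dotProduct, star_mulVec, ← dotProduct_mulVec, mulVec_mulVec]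
  rw [← re_star_dotProduct_self, hC, ← neg_eq_iff_eq_neg.mpr h, neg_mulVec, add_mulVec,
    dotProduct_neg, dotProduct_add, hPA, hAP, map_neg, map_add, RCLike.star_def, RCLike.conj_re,
    two_mul]

variable [DecidableEq n]

/-- The realization `(A, B, L)` is balanced with Hankel singular values `σ`, in no particular
order: `diag σ` is both its controllability and its observability Gramian. -/
structure IsBalanced (A : Matrix n n 𝕜) (B : Matrix n m 𝕜) (L : Matrix o n 𝕜) (σ : n → ℝ) :
    Prop where
  pos : ∀ i, 0 < σ i
  controllability : A * realDiagonal 𝕜 σ + realDiagonal 𝕜 σ * Aᴴ = -(B * Bᴴ)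
  observability : Aᴴ * realDiagonal 𝕜 σ + realDiagonal 𝕜 σ * A = -(Lᴴ * L)

namespace IsBalanced

variable {A : Matrix n n 𝕜} {B : Matrix n m 𝕜} {L : Matrix o n 𝕜} {σ : n → ℝ}

lemma dual (h : IsBalanced A B L σ) : IsBalanced Aᴴ Lᴴ Bᴴ σ where
  pos := h.pos
  controllability := by simpa only [conjTranspose_conjTranspose] using h.observability
  observability := by simpa only [conjTranspose_conjTranspose] using h.controllability

lemma sub_smul_one (h : IsBalanced A B L σ) {s : 𝕜} (hs : RCLike.re s = 0) :
    IsBalanced (A - s • 1) B L σ := by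
  have hstar : star s = -s := by
    rw [RCLike.star_def, RCLike.conj_eq_re_sub_im, ← RCLike.re_add_im s, hs]
    simp
  refine ⟨h.pos, ?_, ?_⟩
  · simp [← h.controllability, hstar, sub_mul, mul_add]
  · simp [← h.observability, hstar, mul_sub, add_mul]

lemma submatrix [Fintype k] [DecidableEq k] (h : IsBalanced A B L σ) (e : k ↪ n) :
    IsBalanced (A.submatrix e e) (B.submatrix e id) (L.submatrix id e) (σ ∘ e) where
  pos i := h.pos (e i)
  controllability := by
    ext i j
    have hij := congr_fun₂ h.controllability (e i) (e j)
    simp only [realDiagonal, Matrix.add_apply, mul_diagonal, diagonal_mul] at hij ⊢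
    exact hij
  observability := by
    ext i j
    have hij := congr_fun₂ h.observability (e i) (e j)
    simp only [realDiagonal, Matrix.add_apply, mul_diagonal, diagonal_mul] at hij ⊢
    exact hij

lemma lyapunov_inv_gramian (h : IsBalanced A B L σ) :
    Aᴴ * realDiagonal 𝕜 σ⁻¹ + realDiagonal 𝕜 σ⁻¹ * A =
      -((Bᴴ * realDiagonal 𝕜 σ⁻¹)ᴴ * (Bᴴ * realDiagonal 𝕜 σ⁻¹)) := by
  set S := realDiagonal 𝕜 σ
  set T := realDiagonal 𝕜 σ⁻¹
  have hST : S * T = 1 := realDiagonal_mul_inv fun i => (h.pos i).ne'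
  have hTS : T * S = 1 := mul_eq_one_comm.mp hST
  have hT : Tᴴ = T := isHermitian_realDiagonal σ⁻¹
  calc Aᴴ * T + T * A = T * S * Aᴴ * T + T * A * (S * T) := by
        rw [hTS, hST, one_mul, mul_one]
    _ = T * (A * S + S * Aᴴ) * T := by noncomm_ring
    _ = -((Bᴴ * T)ᴴ * (Bᴴ * T)) := by
        rw [h.controllability, conjTranspose_mul, conjTranspose_conjTranspose, hT]
        simp only [mul_neg, neg_mul, Matrix.mul_assoc]

lemma conjTranspose_mulVec_gramian (h : IsBalanced A B L σ) {z : n → 𝕜}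
    (hz : ∀ i, z i = 0 ∨ (A *ᵥ z) i = 0) :
    Aᴴ *ᵥ realDiagonal 𝕜 σ *ᵥ z = -(realDiagonal 𝕜 σ *ᵥ A *ᵥ z) := by
  have horth : star (realDiagonal 𝕜 σ *ᵥ z) ⬝ᵥ A *ᵥ z = 0 :=
    Finset.sum_eq_zero fun i _ => by
      rcases hz i with hi | hi <;> simp [realDiagonal_mulVec_apply, hi]
  -- The energy identity reads `‖L z‖ ^ 2 = 0`, since `Σ z` and `A z` have disjoint supports.
  have hLz : L *ᵥ z = 0 := by
    have henergy := norm_sq_mulVec_of_lyapunov (isHermitian_realDiagonal σ) h.observability z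
    simpa [horth] using henergy
  have hsum := congr_arg (· *ᵥ z) h.observability
  simp only [add_mulVec, neg_mulVec, ← mulVec_mulVec, hLz, mulVec_zero, neg_zero] at hsum
  exact eq_neg_of_add_eq_zero_left hsum

lemma mulVec_sq_gramian (h : IsBalanced A B L σ) {z : n → 𝕜}
    (hz : ∀ i, z i = 0 ∨ (A *ᵥ z) i = 0) :
    A *ᵥ realDiagonal 𝕜 (σ ^ 2) *ᵥ z = realDiagonal 𝕜 (σ ^ 2) *ᵥ A *ᵥ z := by
  set S := realDiagonal 𝕜 σ
  have hprimal : Aᴴ *ᵥ S *ᵥ z = -(S *ᵥ A *ᵥ z) := h.conjTranspose_mulVec_gramian hz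
  -- By `hprimal`, `S z` satisfies the support condition of `z` for the dual realization.
  have hdual : A *ᵥ S *ᵥ S *ᵥ z = -(S *ᵥ Aᴴ *ᵥ S *ᵥ z) := by
    have hSz (i : n) : (S *ᵥ z) i = 0 ∨ (Aᴴ *ᵥ S *ᵥ z) i = 0 := by
      rw [hprimal]
      exact (hz i).imp (fun hi => by rw [realDiagonal_mulVec_apply, hi, mul_zero])
        fun hi => by rw [Pi.neg_apply, realDiagonal_mulVec_apply, hi, mul_zero, neg_zero]
    simpa only [conjTranspose_conjTranspose] using h.dual.conjTranspose_mulVec_gramian hSz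
  rw [sq, ← realDiagonal_mul, ← mulVec_mulVec, hdual, hprimal, mulVec_neg, neg_neg, mulVec_mulVec]

lemma mulVec_prod_sq_gramian_sub (h : IsBalanced A B L σ) {z : n → 𝕜}
    (hz : ∀ i, z i = 0 ∨ (A *ᵥ z) i = 0) (t : Finset ℝ) :
    A *ᵥ realDiagonal 𝕜 (fun i => ∏ a ∈ t, (σ i ^ 2 - a)) *ᵥ z =
      realDiagonal 𝕜 (fun i => ∏ a ∈ t, (σ i ^ 2 - a)) *ᵥ A *ᵥ z := by
  induction t using Finset.induction_on with
  | empty => simp [realDiagonal]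
  | insert a t ha ih =>
    set D := realDiagonal 𝕜 fun i => ∏ b ∈ t, (σ i ^ 2 - b)
    have hDz (i : n) : (D *ᵥ z) i = 0 ∨ (A *ᵥ D *ᵥ z) i = 0 := by
      rw [ih]
      exact (hz i).imp (fun hi => by rw [realDiagonal_mulVec_apply, hi, mul_zero])
        fun hi => by rw [realDiagonal_mulVec_apply, hi, mul_zero]
    have hinsert (w : n → 𝕜) : realDiagonal 𝕜 (fun i => ∏ b ∈ insert a t, (σ i ^ 2 - b)) *ᵥ w =
        realDiagonal 𝕜 (σ ^ 2) *ᵥ D *ᵥ w - (a : 𝕜) • D *ᵥ w := by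
      ext i
      simp only [D, realDiagonal_mulVec_apply, Finset.prod_insert ha, Pi.sub_apply, Pi.smul_apply,
        Pi.pow_apply, smul_eq_mul, map_mul, map_sub]
      ring
    rw [hinsert, hinsert, mulVec_sub, mulVec_smul, h.mulVec_sq_gramian hDz, ih]

lemma mulVec_eq_zero_of_forall_ne [Finite k] (h : IsBalanced A B L σ) (e : k ↪ n)
    (hsep : ∀ i, ∀ j ∉ Set.range e, σ (e i) ≠ σ j) {z : n → 𝕜}
    (hz : ∀ j ∉ Set.range e, z j = 0) (hAz : ∀ i, (A *ᵥ z) (e i) = 0) : A *ᵥ z = 0 := by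
  have := Fintype.ofFinite k
  let t : Finset ℝ := Finset.univ.image fun i => σ (e i) ^ 2
  let D := realDiagonal 𝕜 fun j => ∏ a ∈ t, (σ j ^ 2 - a)
  have hcomm : A *ᵥ D *ᵥ z = D *ᵥ A *ᵥ z := by
    refine h.mulVec_prod_sq_gramian_sub (fun j => ?_) t
    by_cases hj : j ∈ Set.range e
    · obtain ⟨i, rfl⟩ := hj
      exact .inr (hAz i)
    · exact .inl (hz j hj)
  have hannihilate : D *ᵥ z = 0 := by
    ext j
    by_cases hj : j ∈ Set.range e
    · obtain ⟨i, rfl⟩ := hj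
      have hmem : σ (e i) ^ 2 ∈ t := Finset.mem_image_of_mem _ (Finset.mem_univ i)
      simp [D, realDiagonal_mulVec_apply, Finset.prod_eq_zero hmem (sub_self _)]
    · simp [realDiagonal_mulVec_apply, D, hz j hj]
  ext j
  by_cases hj : j ∈ Set.range e
  · obtain ⟨i, rfl⟩ := hj
    exact hAz i
  · have hprod : ∏ a ∈ t, (σ j ^ 2 - a) ≠ 0 := by
      refine Finset.prod_ne_zero_iff.mpr fun a ha => ?_
      obtain ⟨i, -, rfl⟩ := Finset.mem_image.mp ha
      rw [sub_ne_zero, Ne, sq_eq_sq₀ (h.pos j).le (h.pos (e i)).le]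
      exact (hsep i j hj).symm
    have hDAz : (D *ᵥ A *ᵥ z) j = 0 := by rw [← hcomm, hannihilate, mulVec_zero, Pi.zero_apply]
    rw [realDiagonal_mulVec_apply] at hDAz
    exact (mul_eq_zero.mp hDAz).resolve_left (RCLike.ofReal_ne_zero.mpr hprod)

variable [Fintype k] [DecidableEq k]

theorem isUnit_submatrix (h : IsBalanced A B L σ) (hA : IsUnit A) (e : k ↪ n)
    (hsep : ∀ i, ∀ j ∉ Set.range e, σ (e i) ≠ σ j) : IsUnit (A.submatrix e e) := by
  rw [← mulVec_injective_iff_isUnit]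
  refine (injective_iff_map_eq_zero (A.submatrix e e).mulVecLin).mpr fun x hx => ?_
  have hx' : (A *ᵥ Function.extend e x 0) ∘ e = 0 :=
    (submatrix_mulVec_eq_mulVec_extend A e e x).symm.trans hx
  have hker : A *ᵥ Function.extend e x 0 = 0 :=
    h.mulVec_eq_zero_of_forall_ne e hsep (fun j hj => Function.extend_apply' x _ j hj)
      (congr_fun hx')
  have hzero : Function.extend e x (0 : n → 𝕜) = 0 :=
    mulVec_injective_iff_isUnit.mpr hA (hker.trans (mulVec_zero A).symm)
  rw [← Function.extend_comp e.injective x (0 : n → 𝕜), hzero]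
  rfl

lemma norm_mulVec_le_of_mulVec_add (h : IsBalanced A B L σ) {c : ℝ} (hc : 0 ≤ c)
    {d t : n → 𝕜} {u : m → 𝕜} (hsum : A *ᵥ t + A *ᵥ d = (2 : 𝕜) • B *ᵥ u)
    (hd : ∀ i, (A *ᵥ d) i = 0 ∨ σ i = c ∧ t i = d i) :
    ‖WithLp.toLp 2 (L *ᵥ d)‖ ≤ 2 * c * ‖WithLp.toLp 2 u‖ := by
  set S := realDiagonal 𝕜 σ
  set T := realDiagonal 𝕜 σ⁻¹
  set g := (Bᴴ * T) *ᵥ t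
  have hobsv : ‖WithLp.toLp 2 (L *ᵥ d)‖ ^ 2 = -(2 * RCLike.re (star (S *ᵥ d) ⬝ᵥ A *ᵥ d)) :=
    norm_sq_mulVec_of_lyapunov (isHermitian_realDiagonal σ) h.observability d
  have hctrb : ‖WithLp.toLp 2 g‖ ^ 2 = -(2 * RCLike.re (star (T *ᵥ t) ⬝ᵥ A *ᵥ t)) :=
    norm_sq_mulVec_of_lyapunov (isHermitian_realDiagonal σ⁻¹) h.lyapunov_inv_gramian t
  have hg : star (T *ᵥ t) ⬝ᵥ B *ᵥ u = star g ⬝ᵥ u := by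
    simp only [g, ← mulVec_mulVec, star_mulVec Bᴴ, conjTranspose_conjTranspose, dotProduct_mulVec]
  have hsplit : RCLike.re (star (T *ᵥ t) ⬝ᵥ A *ᵥ t) =
      2 * RCLike.re (star g ⬝ᵥ u) - RCLike.re (star (T *ᵥ t) ⬝ᵥ A *ᵥ d) := by
    rw [eq_sub_of_add_eq hsum, dotProduct_sub, dotProduct_smul, hg]
    simp
  have hscale : star (S *ᵥ d) ⬝ᵥ A *ᵥ d = ((c ^ 2 : ℝ) : 𝕜) * (star (T *ᵥ t) ⬝ᵥ A *ᵥ d) := by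
    simp only [dotProduct, Finset.mul_sum]
    refine Finset.sum_congr rfl fun i _ => ?_
    rcases hd i with hi | ⟨rfl, hi⟩
    · simp [hi]
    · have hne : (σ i : 𝕜) ≠ 0 := RCLike.ofReal_ne_zero.mpr (h.pos i).ne'
      simp only [S, T, Pi.star_apply, realDiagonal_mulVec_apply, star_mul', RCLike.star_def,
        RCLike.conj_ofReal, map_pow, Pi.inv_apply, map_inv₀, hi, star_inv₀]
      field_simp
  have hcauchy := neg_le_of_abs_le (abs_re_star_dotProduct_le g u)
  refine le_of_sq_le_sq ?_ (by positivity)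
  calc ‖WithLp.toLp 2 (L *ᵥ d)‖ ^ 2
      = c ^ 2 * (-(4 * RCLike.re (star g ⬝ᵥ u)) - ‖WithLp.toLp 2 g‖ ^ 2) := by
        rw [hobsv, hscale, RCLike.re_ofReal_mul, hctrb, hsplit]
        ring
    _ ≤ c ^ 2 * (4 * ‖WithLp.toLp 2 u‖ ^ 2) := by
        gcongr
        nlinarith [sq_nonneg (‖WithLp.toLp 2 g‖ - 2 * ‖WithLp.toLp 2 u‖)]
    _ = (2 * c * ‖WithLp.toLp 2 u‖) ^ 2 := by ring

open scoped Matrix.Norms.L2Operator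

variable [DecidableEq m]

lemma norm_sub_submatrix_le (h : IsBalanced A B L σ) (hA : IsUnit A) (e : k ↪ n)
    (hAe : IsUnit (A.submatrix e e)) {c : ℝ} (hc : 0 ≤ c) (hσ : ∀ j ∉ Set.range e, σ j = c) :
    ‖L * A⁻¹ * B - L.submatrix id e * (A.submatrix e e)⁻¹ * B.submatrix e id‖ ≤ 2 * c := by
  refine l2_opNorm_le_of_norm_mulVec_le (by positivity) fun u => ?_
  let x := (A.submatrix e e)⁻¹ *ᵥ B.submatrix e id *ᵥ u
  let z := Function.extend e x 0
  let y := A⁻¹ *ᵥ B *ᵥ u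
  have hy : A *ᵥ y = B *ᵥ u := by
    rw [mulVec_mulVec, mul_nonsing_inv A ((isUnit_iff_isUnit_det A).mp hA), one_mulVec]
  have hz : (A *ᵥ z) ∘ e = (B *ᵥ u) ∘ e := by
    rw [← submatrix_mulVec_eq_mulVec_extend, mulVec_mulVec,
      mul_nonsing_inv _ ((isUnit_iff_isUnit_det _).mp hAe), one_mulVec]
    rfl
  have herror : (L * A⁻¹ * B - L.submatrix id e * (A.submatrix e e)⁻¹ * B.submatrix e id) *ᵥ u =
      L *ᵥ (y - z) := by
    rw [sub_mulVec, mulVec_sub, ← mulVec_mulVec, ← mulVec_mulVec, ← mulVec_mulVec,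
      ← mulVec_mulVec, submatrix_mulVec_eq_mulVec_extend, Function.comp_id]
  rw [herror]
  refine h.norm_mulVec_le_of_mulVec_add hc (t := y + z) ?_ fun j => ?_
  · rw [mulVec_add, mulVec_sub, hy, two_smul]
    abel
  · by_cases hj : j ∈ Set.range e
    · obtain ⟨i, rfl⟩ := hj
      left
      rw [mulVec_sub, hy, Pi.sub_apply, sub_eq_zero]
      exact (congr_fun hz i).symm
    · have hzj : z j = 0 := Function.extend_apply' x _ j hj
      exact .inr ⟨hσ j hj, by rw [Pi.add_apply, Pi.sub_apply, hzj, add_zero, sub_zero]⟩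

lemma norm_sub_submatrix_le_sum (h : IsBalanced A B L σ) (hA : IsUnit A) (e : k ↪ n)
    (V : Finset ℝ) (hV : ∀ j, σ j ∈ V ↔ j ∉ Set.range e) (hnonneg : ∀ c ∈ V, 0 ≤ c) :
    ‖L * A⁻¹ * B - L.submatrix id e * (A.submatrix e e)⁻¹ * B.submatrix e id‖ ≤
      2 * ∑ c ∈ V, c := by
  induction V using Finset.induction_on generalizing n with
  | empty =>
    have hrange (j : n) : j ∈ Set.range e := by simpa using hV j
    have hAe : IsUnit (A.submatrix e e) :=
      h.isUnit_submatrix hA e fun _ j hj => absurd (hrange j) hj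
    simpa using h.norm_sub_submatrix_le hA e hAe le_rfl fun j hj => absurd (hrange j) hj
  | insert c V hcV ih =>
    classical
    let e₁ : {i | σ i ≠ c} ↪ n := Function.Embedding.subtype _
    have hdropped (j : n) : j ∉ Set.range e₁ ↔ σ j = c := by simp [e₁]
    have hkept (i : k) : σ (e i) ∉ insert c V := fun hi => (hV (e i)).mp hi ⟨i, rfl⟩
    let e₂ : k ↪ {i | σ i ≠ c} := e.codRestrict _ fun i hi =>
      hkept i (hi ▸ Finset.mem_insert_self c V)
    have hrange (j : {i | σ i ≠ c}) : j ∈ Set.range e₂ ↔ (j : n) ∈ Set.range e := by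
      simp [e₂, Subtype.ext_iff]
    have hA₁ : IsUnit (A.submatrix e₁ e₁) := h.isUnit_submatrix hA e₁ fun i j hj =>
      ((hdropped j).mp hj).symm ▸ i.2
    have hfirst := h.norm_sub_submatrix_le hA e₁ hA₁ (hnonneg c (Finset.mem_insert_self c V))
      fun j => (hdropped j).mp
    have hrest := ih (h.submatrix e₁) hA₁ e₂
      (fun j => by
        rw [hrange, ← hV j, Finset.mem_insert]
        exact (or_iff_right j.2).symm)
      fun a ha => hnonneg a (Finset.mem_insert_of_mem ha)
    rw [Finset.sum_insert hcV, mul_add]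
    exact (norm_sub_le_norm_sub_add_norm_sub _ _ _).trans (add_le_add hfirst hrest)

end IsBalanced

open scoped Matrix.Norms.L2Operator

theorem balanced_truncation_error_bound_general [DecidableEq m] [Fintype k] [DecidableEq k]
    {A : Matrix n n 𝕜} {B : Matrix n m 𝕜} {L : Matrix o n 𝕜} {σ : n → ℝ}
    (h : IsBalanced A B L σ) (e : k ↪ n) (hsep : ∀ i, ∀ j ∉ Set.range e, σ (e i) ≠ σ j)
    {s : 𝕜} (hs : RCLike.re s = 0) (hA : IsUnit (s • 1 - A)) :
    IsUnit (s • 1 - A.submatrix e e) ∧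
      ‖L * (s • 1 - A)⁻¹ * B -
          L.submatrix id e * (s • 1 - A.submatrix e e)⁻¹ * B.submatrix e id‖ ≤
        2 * ∑ c ∈ (Finset.univ.map e)ᶜ.image σ, c := by
  have hshift : IsBalanced (A - s • 1) B L σ := h.sub_smul_one hs
  have hA' : IsUnit (A - s • 1) := by simpa only [neg_sub] using hA.neg
  have hsub : s • 1 - A.submatrix e e = -(A - s • 1).submatrix e e := by
    rw [← submatrix_one_embedding e]
    ext i j
    exact (neg_sub _ _).symm
  have hAe : IsUnit ((A - s • 1).submatrix e e) := hshift.isUnit_submatrix hA' e hsep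
  have hV (j : n) : σ j ∈ (Finset.univ.map e)ᶜ.image σ ↔ j ∉ Set.range e := by
    simp only [Finset.mem_image, Finset.mem_compl, Finset.mem_map, Finset.mem_univ, true_and]
    refine ⟨?_, fun hj => ⟨j, hj, rfl⟩⟩
    rintro ⟨j', hj', hσ⟩ ⟨i, rfl⟩
    exact hsep i j' hj' hσ.symm
  have hnonneg : ∀ c ∈ (Finset.univ.map e)ᶜ.image σ, 0 ≤ c :=
    Finset.forall_mem_image.mpr fun j _ => (h.pos j).le
  rw [hsub, ← neg_sub A, inv_neg_of_isUnit hA', inv_neg_of_isUnit hAe]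
  simp only [Matrix.mul_neg, Matrix.neg_mul, neg_sub_neg]
  refine ⟨hAe.neg, ?_⟩
  rw [norm_sub_rev]
  exact hshift.norm_sub_submatrix_le_sum hA' e _ hV hnonneg

end Balanced

section Complexification

lemma IsHurwitz.isUnit_smul_one_sub {N : ℕ} {A : Matrix (Fin N) (Fin N) ℝ} (hA : IsHurwitz A)
    {s : ℂ} (hs : s.re = 0) : IsUnit (s • 1 - A.map ofReal) := by
  by_contra hnot
  have hmem : s ∈ spectrum ℂ (A.map ofReal) := by
    rwa [spectrum.mem_iff, Algebra.algebraMap_eq_smul_one]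
  exact (hA s hmem).ne hs

variable {m n o : Type*}

lemma conjTranspose_map_ofReal (M : Matrix m n ℝ) : (M.map ofReal)ᴴ = Mᵀ.map ofReal := by
  ext i j
  exact conj_ofReal (M j i)

lemma realDiagonal_eq_map_ofReal [DecidableEq n] (d : n → ℝ) :
    realDiagonal ℂ d = (diagonal d).map ofReal :=
  (diagonal_map ofReal_zero).symm

variable [Fintype m] [Fintype n] [Fintype o] [DecidableEq n]

lemma isBalanced_map_ofReal {A : Matrix n n ℝ} {B : Matrix n m ℝ} {L : Matrix o n ℝ} {σ : n → ℝ}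
    (hpos : ∀ i, 0 < σ i) (hctrb : A * diagonal σ + diagonal σ * Aᵀ = -(B * Bᵀ))
    (hobsv : Aᵀ * diagonal σ + diagonal σ * A = -(Lᵀ * L)) :
    IsBalanced (A.map ofReal) (B.map ofReal) (L.map ofReal) σ where
  pos := hpos
  controllability := by
    have hmap := congr_arg (fun M => M.map ofRealHom) hctrb
    simp only [Matrix.map_add, Matrix.map_neg, Matrix.map_mul, map_add, map_neg,
      implies_true] at hmap
    rwa [conjTranspose_map_ofReal, conjTranspose_map_ofReal, realDiagonal_eq_map_ofReal]
  observability := by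
    have hmap := congr_arg (fun M => M.map ofRealHom) hobsv
    simp only [Matrix.map_add, Matrix.map_neg, Matrix.map_mul, map_add, map_neg,
      implies_true] at hmap
    rwa [conjTranspose_map_ofReal, conjTranspose_map_ofReal, realDiagonal_eq_map_ofReal]

end Complexification

lemma compl_map_castLEEmb {r N : ℕ} (h : r ≤ N) :
    (Finset.univ.map (Fin.castLEEmb h))ᶜ = Finset.univ.filter fun i : Fin N => r ≤ (i : ℕ) := by
  ext i
  have hrange : (∃ j, Fin.castLEEmb h j = i) ↔ (i : ℕ) < r :=
    Set.ext_iff.mp (Fin.range_castLE h) i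
  rw [Finset.mem_compl, Finset.mem_filter_univ, ← not_lt, ← hrange]
  simp only [Finset.mem_map, Finset.mem_univ, true_and]

/-- Balanced truncation error bound: for a stable balanced
realization `(A, B, L)` with Gramians `Σ = diag(σ₁ > … > σ_N > 0)`, truncating
the last `N − r` states gives a reduced model `(Ã, B̃, L̃)` such that both
resolvents `iωI − A`, `iωI − Ã` are invertible for every real `ω` and the
`H∞` error satisfies
`‖L(iωI − A)⁻¹B − L̃(iωI − Ã)⁻¹B̃‖ ≤ 2(σ_{r+1} + … + σ_N)` for all `ω`. -/
theorem balanced_truncation_error_bound {N p q : ℕ}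
    (A : Matrix (Fin N) (Fin N) ℝ) (hA : IsHurwitz A)
    (B : Matrix (Fin N) (Fin p) ℝ) (L : Matrix (Fin q) (Fin N) ℝ)
    (σ : Fin N → ℝ) (hmono : StrictAnti σ) (hpos : ∀ i, 0 < σ i)
    (hctrb : A * Matrix.diagonal σ + Matrix.diagonal σ * Aᵀ = -(B * Bᵀ))
    (hobsv : Aᵀ * Matrix.diagonal σ + Matrix.diagonal σ * A = -(Lᵀ * L))
    (r : ℕ) (hr1 : 1 ≤ r) (hrN : r < N) :
    letI h : r ≤ N := le_of_lt hrN
    letI At := A.submatrix (Fin.castLE h) (Fin.castLE h)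
    letI Bt := B.submatrix (Fin.castLE h) id
    letI Lt := L.submatrix id (Fin.castLE h)
    (∀ ω : ℝ, IsUnit ((Complex.I * ω) • (1 : Matrix (Fin N) (Fin N) ℂ)
        - A.map ofReal)) ∧
    (∀ ω : ℝ, IsUnit ((Complex.I * ω) • (1 : Matrix (Fin r) (Fin r) ℂ)
        - At.map ofReal)) ∧
    ∀ ω : ℝ,
      matOpNorm
        (L.map ofReal *
            ((Complex.I * ω) • (1 : Matrix (Fin N) (Fin N) ℂ)
              - A.map ofReal)⁻¹ * B.map ofReal -
          Lt.map ofReal *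
            ((Complex.I * ω) • (1 : Matrix (Fin r) (Fin r) ℂ)
              - At.map ofReal)⁻¹ * Bt.map ofReal)
        ≤ 2 * ∑ i ∈ Finset.univ.filter (fun i : Fin N => r ≤ (i : ℕ)), σ i := by
  have hbalanced : IsBalanced (A.map ofReal) (B.map ofReal) (L.map ofReal) σ :=
    isBalanced_map_ofReal hpos hctrb hobsv
  have hre (ω : ℝ) : (I * ω).re = 0 := by simp
  have hunit (ω : ℝ) : IsUnit ((I * ω) • 1 - A.map ofReal) := hA.isUnit_smul_one_sub (hre ω)
  have hsep (i : Fin r) (j : Fin N) (hj : j ∉ Set.range (Fin.castLEEmb hrN.le)) :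
      σ (Fin.castLEEmb hrN.le i) ≠ σ j :=
    hmono.injective.ne fun hij => hj ⟨i, hij⟩
  have htruncation (ω : ℝ) := balanced_truncation_error_bound_general hbalanced
    (Fin.castLEEmb hrN.le) hsep (hre ω) (hunit ω)
  refine ⟨hunit, fun ω => (htruncation ω).1, fun ω => ?_⟩
  rw [matOpNorm_eq_l2_opNorm, ← compl_map_castLEEmb hrN.le,
    ← Finset.sum_image (f := fun c => c) hmono.injective.injOn]
  exact (htruncation ω).2
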